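/- Let λ ∈ (0,1) and σ := √(1−λ) ∈ (0,1). Then for every r ≥ 5/2: (i) the residual R₂(r) := −(w₂⁻)''(r) − (2/r)·(w₂⁻)'(r) + (1 − λ − a₁·e^{−2r}/r²)·w₂⁻(r) − g₃₀(r) satisfies |R₂(r)| < (3/250)·e^{−2r}/r³, and (ii) |w₂⁻(r)| < (51/50)·e^{−σr}. -/

import Mathlib

/-! Put `u_σ(r) = r g₃(r)` (`rg3`), so that `r w₂⁻ = λ⁻¹ (u_σ - u_1)`. The function `u_σ` solves
`u'' = σ² u - a₁ e^{-(2+σ)r} / r²` and is asymptotic to `e^{-σr}`, so variation of constants gives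
`u_σ(r) = e^{-σr} - a₁ P_σ(r)` with the positive integral
`P_σ(r) = ∫_r^∞ e^{-2s} φ_σ(r, s) / s² ds`, `φ_σ(r, s) = ∫_0^{s-r} e^{-σ(r+2τ)} dτ`.
Inserting this, everything in the residual cancels except
`R₂ = a₁² e^{-2r} r⁻³ · (P_σ - P_1) / λ` (`residual_eq`), while
`r w₂⁻ = (e^{-σr} - e^{-r}) / λ - a₁ (P_σ - P_1) / λ`.

Both bounds therefore rest on `0 ≤ P_σ - P_1 ≤ λ P_0` (`tail_sub_bounds`). Convexity of `exp` yields
`0 ≤ e^{-σc} - e^{-c} ≤ 1 - σ² = λ` for `c ≥ 0`, which integrates to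
`0 ≤ φ_σ - φ_1 ≤ λ (s - r)`, and hence to the claim. Finally `P_0(r) = (2r+1) E(2r) - e^{-2r}`, and
the bound `E(x) ≤ e^{-x} (x+1) / (x(x+2))` gives `P_0(r) ≤ e^{-2r} / 35` for `r ≥ 5/2`.

The integrals `P_σ` and `P_0` enter only through closed forms in `E` (`tail`, `tailZero`) with the
lower limit as a separate variable `s`: such a closed form tends to `0` at infinity, so inequalities
between them follow from inequalities between their `s`-derivatives. -/

open Real Set Filter MeasureTheory

/-- `E x = ∫_x^∞ e^{-t}/t dt`, so that `Ei(-x) = -E x` for `x > 0`. -/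
noncomputable def expInt (x : ℝ) : ℝ := ∫ t in Set.Ioi x, Real.exp (-t) / t

/-- `g(r) = r⁻¹ (e^{-r} E(2r) - 2 e^{r} E(4r))`. -/
noncomputable def gfun (r : ℝ) : ℝ :=
  r⁻¹ * (Real.exp (-r) * expInt (2 * r) - 2 * Real.exp r * expInt (4 * r))

/-- `a₁ = (6839/2521)²`. -/
noncomputable def a1 : ℝ := (6839 / 2521) ^ 2

/-- `g₃(r) = (σr)⁻¹ e^{-σr} (σ + a₁ E(2r) - a₁ e^{2σr} (1+σ) E(2(1+σ)r))`. -/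
noncomputable def g3 (σ r : ℝ) : ℝ :=
  (σ * r)⁻¹ * Real.exp (-σ * r) *
    (σ + a1 * expInt (2 * r)
      - a1 * Real.exp (2 * σ * r) * (1 + σ) * expInt (2 * (1 + σ) * r))

/-- `g₃₀(r) = e^{-r}/r + a₁ g(r)` (the value of `g₃` at `λ = 0`). -/
noncomputable def g30 (r : ℝ) : ℝ := Real.exp (-r) / r + a1 * gfun r

/-- `w₂⁻(r) = λ⁻¹ (g₃(r) - g₃₀(r))` with `σ = √(1-λ)`. -/
noncomputable def w2m (lam r : ℝ) : ℝ :=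
  lam⁻¹ * (g3 (Real.sqrt (1 - lam)) r - g30 r)

open scoped Topology

/-! ### The exponential integral -/

lemma integrableOn_expInt {x : ℝ} (hx : 0 < x) :
    IntegrableOn (fun t : ℝ => Real.exp (-t) / t) (Set.Ioi x) := by
  have h1 : IntegrableOn (fun t : ℝ => x⁻¹ * Real.exp (-t)) (Set.Ioi x) :=
    (integrableOn_exp_neg_Ioi x).const_mul _
  refine Integrable.mono' h1 ?_ ?_
  · refine ContinuousOn.aestronglyMeasurable ?_ measurableSet_Ioi
    refine ContinuousOn.div (by fun_prop) continuousOn_id ?_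
    intro t ht
    exact (hx.trans ht).ne'
  · refine (ae_restrict_mem measurableSet_Ioi).mono fun t ht => ?_
    have ht' : x < t := ht
    have ht0 : 0 < t := hx.trans ht'
    rw [Real.norm_of_nonneg (by positivity), div_eq_inv_mul]
    gcongr

lemma hasDerivAt_expInt {x : ℝ} (hx : 0 < x) :
    HasDerivAt expInt (-(Real.exp (-x) / x)) x := by
  have hx2 : 0 < x / 2 := by linarith
  have hev : expInt =ᶠ[𝓝 x]
      fun y => expInt (x / 2) - ∫ t in (x / 2)..y, Real.exp (-t) / t := by
    filter_upwards [Ioi_mem_nhds (show x / 2 < x by linarith)] with y hy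
    have hy' : x / 2 < y := hy
    have := intervalIntegral.integral_Ioi_sub_Ioi (integrableOn_expInt hx2) hy'.le
    unfold expInt
    linarith
  have hcont : ContinuousAt (fun t : ℝ => Real.exp (-t) / t) x :=
    ContinuousAt.div (by fun_prop) continuousAt_id hx.ne'
  have hint : IntervalIntegrable (fun t : ℝ => Real.exp (-t) / t) volume (x / 2) x := by
    rw [intervalIntegrable_iff_integrableOn_Ioc_of_le (by linarith)]
    exact (integrableOn_expInt hx2).mono_set Set.Ioc_subset_Ioi_self
  have hmeas : StronglyMeasurableAtFilter (fun t : ℝ => Real.exp (-t) / t) (𝓝 x) := by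
    have hm : Measurable (fun t : ℝ => Real.exp (-t) / t) := by fun_prop
    exact hm.stronglyMeasurable.stronglyMeasurableAtFilter
  have h := intervalIntegral.integral_hasDerivAt_right hint hmeas hcont
  exact (h.const_sub (expInt (x / 2))).congr_of_eventuallyEq hev

lemma expInt_nonneg {x : ℝ} (hx : 0 < x) : 0 ≤ expInt x := by
  refine setIntegral_nonneg measurableSet_Ioi fun t ht => ?_
  have : 0 < t := hx.trans ht
  positivity

lemma expInt_le_exp {x : ℝ} (hx : 1 ≤ x) : expInt x ≤ Real.exp (-x) := by
  rw [← integral_exp_neg_Ioi x]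
  refine setIntegral_mono_on (integrableOn_expInt (by linarith)) (integrableOn_exp_neg_Ioi x)
    measurableSet_Ioi fun t ht => ?_
  have ht' : x < t := ht
  exact div_le_self (Real.exp_pos _).le (by linarith)

lemma tendsto_expInt : Tendsto expInt atTop (𝓝 0) := by
  refine squeeze_zero' ?_ ?_ Real.tendsto_exp_neg_atTop_nhds_zero
  · filter_upwards [eventually_ge_atTop 1] with x hx using expInt_nonneg (by linarith)
  · filter_upwards [eventually_ge_atTop 1] with x hx using expInt_le_exp hx

lemma hasDerivAt_expInt_mul {c x : ℝ} (hc : 0 < c) (hx : 0 < x) :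
    HasDerivAt (fun y => expInt (c * y)) (-(Real.exp (-(c * x)) / x)) x := by
  have h := (hasDerivAt_expInt (mul_pos hc hx)).comp x ((hasDerivAt_id x).const_mul c)
  refine h.congr_deriv ?_
  field_simp

lemma tendsto_expInt_mul {c : ℝ} (hc : 0 < c) :
    Tendsto (fun y => expInt (c * y)) atTop (𝓝 0) :=
  tendsto_expInt.comp (tendsto_id.const_mul_atTop hc)

/-- A function that decreases to the limit `0` is nonnegative. This replaces every comparison of
improper integrals by a pointwise comparison of integrands. -/
lemma nonneg_of_deriv_nonpos_of_tendsto {f f' : ℝ → ℝ} {a : ℝ}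
    (hf : ∀ x, a ≤ x → HasDerivAt f (f' x) x) (hf' : ∀ x, a ≤ x → f' x ≤ 0)
    (hlim : Tendsto f atTop (𝓝 0)) : 0 ≤ f a := by
  have hanti : AntitoneOn f (Set.Ici a) := by
    refine antitoneOn_of_hasDerivWithinAt_nonpos (f' := f') (convex_Ici a)
      (fun x hx => (hf x hx).continuousAt.continuousWithinAt) ?_ ?_
    · intro x hx
      rw [interior_Ici] at hx
      exact (hf x (le_of_lt hx)).hasDerivWithinAt
    · intro x hx
      rw [interior_Ici] at hx
      exact hf' x (le_of_lt hx)
  refine le_of_tendsto hlim ?_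
  filter_upwards [eventually_ge_atTop a] with x hx
  exact hanti Set.self_mem_Ici hx hx

/-- The second convergent of the continued fraction of `E` is an upper bound. -/
lemma expInt_le {x : ℝ} (hx : 0 < x) :
    expInt x ≤ Real.exp (-x) * ((x + 1) / (x * (x + 2))) := by
  have key := nonneg_of_deriv_nonpos_of_tendsto
    (f := fun y => Real.exp (-y) * ((y + 1) / (y * (y + 2))) - expInt y)
    (f' := fun y => -(Real.exp (-y) * (2 / (y * (y + 2)) ^ 2))) (a := x) ?_ ?_ ?_
  · simpa using key
  · intro y hy
    have hy0 : 0 < y := by linarith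
    have h1 : HasDerivAt (fun y : ℝ => Real.exp (-y)) (-Real.exp (-y)) y := by
      simpa using (hasDerivAt_neg y).exp
    have h2 : HasDerivAt (fun y : ℝ => y * (y + 2)) (1 * (y + 2) + y * 1) y :=
      (hasDerivAt_id y).mul ((hasDerivAt_id y).add_const 2)
    have h3 : HasDerivAt (fun y : ℝ => (y + 1) / (y * (y + 2)))
        ((1 * (y * (y + 2)) - (y + 1) * (1 * (y + 2) + y * 1)) / (y * (y + 2)) ^ 2) y :=
      ((hasDerivAt_id y).add_const 1).div h2 (by positivity)
    refine ((h1.mul h3).sub (hasDerivAt_expInt hy0)).congr_deriv ?_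
    field_simp
    ring
  · intro y hy
    have hy0 : 0 < y := by linarith
    have : 0 ≤ Real.exp (-y) * (2 / (y * (y + 2)) ^ 2) := by positivity
    linarith
  · have h : Tendsto (fun y : ℝ => Real.exp (-y) * ((y + 1) / (y * (y + 2)))) atTop (𝓝 0) := by
      refine squeeze_zero' ?_ ?_ Real.tendsto_exp_neg_atTop_nhds_zero
      · filter_upwards [eventually_ge_atTop 1] with y hy
        have : 0 < y := by linarith
        positivity
      · filter_upwards [eventually_ge_atTop 1] with y hy
        refine mul_le_of_le_one_right (Real.exp_pos _).le ?_
        rw [div_le_one (by nlinarith)]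
        nlinarith
    simpa using h.sub tendsto_expInt

/-! ### The tail integral -/

/-- The kernel `φ_σ(r, s) = e^{-σr} (1 - e^{-2σ(s-r)}) / (2σ)`, that is, `sinh (σ(s-r)) / σ`
multiplied by `e^{-σs}`. -/
noncomputable def phi (σ r s : ℝ) : ℝ :=
  Real.exp (-σ * r) * (1 - Real.exp (-2 * σ * (s - r))) / (2 * σ)

/-- The closed form of `∫_s^∞ e^{-2y} φ_σ(r, y) / y² dy`, obtained by parts. -/
noncomputable def tail (σ r s : ℝ) : ℝ :=
  σ⁻¹ * ((1 + σ) * Real.exp (σ * r) * expInt (2 * (1 + σ) * s)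
    - Real.exp (-σ * r) * expInt (2 * s)) + Real.exp (-2 * s) * phi σ r s / s

/-- The closed form of `∫_s^∞ e^{-2y} (y - r) / y² dy`, the limit of `tail σ r s` as `σ → 0`. -/
noncomputable def tailZero (r s : ℝ) : ℝ :=
  (1 + 2 * r) * expInt (2 * s) - r * (Real.exp (-2 * s) / s)

lemma hasDerivAt_exp_mul (c x : ℝ) :
    HasDerivAt (fun y => Real.exp (c * y)) (c * Real.exp (c * x)) x := by
  have h := ((hasDerivAt_id x).const_mul c).exp
  simpa [mul_comm] using h

lemma hasDerivAt_phi {σ : ℝ} (hσ : 0 < σ) (r s : ℝ) :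
    HasDerivAt (phi σ r) (Real.exp (-σ * (r + 2 * (s - r)))) s := by
  have h1 : HasDerivAt (fun y => Real.exp (-2 * σ * (y - r)))
      (Real.exp (-2 * σ * (s - r)) * (-2 * σ * 1)) s :=
    (((hasDerivAt_id s).sub_const r).const_mul (-2 * σ)).exp
  have h2 := ((h1.const_sub 1).const_mul (Real.exp (-σ * r))).div_const (2 * σ)
  refine h2.congr_deriv ?_
  rw [show -σ * (r + 2 * (s - r)) = -σ * r + -2 * σ * (s - r) by ring, Real.exp_add]
  field_simp

lemma hasDerivAt_tail {σ r s : ℝ} (hσ : 0 < σ) (hs : 0 < s) :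
    HasDerivAt (tail σ r) (-(Real.exp (-2 * s) * phi σ r s / s ^ 2)) s := by
  have h1 := (hasDerivAt_expInt_mul (c := 2 * (1 + σ)) (by positivity) hs).const_mul
    ((1 + σ) * Real.exp (σ * r))
  have h2 := (hasDerivAt_expInt_mul (c := 2) (by positivity) hs).const_mul (Real.exp (-σ * r))
  have h3 := (((hasDerivAt_exp_mul (-2) s).mul (hasDerivAt_phi hσ r s)).div
    (hasDerivAt_id s) hs.ne')
  refine (((h1.sub h2).const_mul σ⁻¹).add h3).congr_deriv ?_
  simp only [id, Pi.mul_apply]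
  unfold phi
  have e1 : Real.exp (-(2 * (1 + σ) * s)) = Real.exp (-2 * s) * Real.exp (-σ * s) ^ 2 := by
    rw [← Real.exp_nat_mul, ← Real.exp_add]; congr 1; push_cast; ring
  have e2 : Real.exp (σ * r) = (Real.exp (-σ * r))⁻¹ := by
    rw [← Real.exp_neg]; congr 1; ring
  have e3 : Real.exp (-σ * (r + 2 * (s - r)))
      = Real.exp (-σ * s) ^ 2 * (Real.exp (-σ * r))⁻¹ := by
    rw [← Real.exp_nat_mul, ← Real.exp_neg, ← Real.exp_add]; congr 1; push_cast; ring
  have e4 : Real.exp (-2 * σ * (s - r))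
      = Real.exp (-σ * s) ^ 2 * ((Real.exp (-σ * r))⁻¹) ^ 2 := by
    rw [← Real.exp_nat_mul, ← Real.exp_neg, ← Real.exp_nat_mul, ← Real.exp_add]
    congr 1; push_cast; ring
  have e5 : Real.exp (-(2 * s)) = Real.exp (-2 * s) := by congr 1; ring
  have hne : Real.exp (-σ * r) ≠ 0 := (Real.exp_pos _).ne'
  rw [e1, e2, e3, e4, e5]
  generalize Real.exp (-σ * r) = A at *
  field_simp
  ring

lemma tendsto_exp_neg_two_mul : Tendsto (fun s : ℝ => Real.exp (-2 * s)) atTop (𝓝 0) :=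
  Real.tendsto_exp_atBot.comp (tendsto_id.const_mul_atTop_of_neg (by norm_num))

lemma tendsto_tail {σ : ℝ} (hσ : 0 < σ) (r : ℝ) : Tendsto (tail σ r) atTop (𝓝 0) := by
  have h1 := (tendsto_expInt_mul (c := 2 * (1 + σ)) (by positivity)).const_mul
    ((1 + σ) * Real.exp (σ * r))
  have h2 := (tendsto_expInt_mul (c := 2) (by positivity)).const_mul (Real.exp (-σ * r))
  have h3 : Tendsto (fun s => Real.exp (-2 * σ * (s - r))) atTop (𝓝 0) :=
    Real.tendsto_exp_atBot.comp ((tendsto_atTop_add_const_right _ (-r)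
      tendsto_id).const_mul_atTop_of_neg (by linarith))
  have h4 : Tendsto (phi σ r) atTop (𝓝 (Real.exp (-σ * r) * (1 - 0) / (2 * σ))) :=
    ((h3.const_sub 1).const_mul _).div_const _
  have h5 := (tendsto_exp_neg_two_mul.mul h4).mul tendsto_inv_atTop_zero
  have h6 := ((h1.sub h2).const_mul σ⁻¹).add h5
  rw [show σ⁻¹ * ((1 + σ) * Real.exp (σ * r) * 0 - Real.exp (-σ * r) * 0)
    + 0 * (Real.exp (-σ * r) * (1 - 0) / (2 * σ)) * 0 = 0 by ring] at h6
  exact h6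

lemma hasDerivAt_tailZero {r s : ℝ} (hs : 0 < s) :
    HasDerivAt (tailZero r) (-(Real.exp (-2 * s) * (s - r) / s ^ 2)) s := by
  have h2 := (hasDerivAt_expInt_mul (c := 2) (by positivity) hs).const_mul (1 + 2 * r)
  have h3 := ((hasDerivAt_exp_mul (-2) s).div (hasDerivAt_id s) hs.ne').const_mul r
  refine (h2.sub h3).congr_deriv ?_
  have e5 : Real.exp (-(2 * s)) = Real.exp (-2 * s) := by congr 1; ring
  simp only [id]
  rw [e5]
  field_simp
  ring

lemma tendsto_tailZero (r : ℝ) : Tendsto (tailZero r) atTop (𝓝 0) := by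
  have h2 := (tendsto_expInt_mul (c := 2) (by positivity)).const_mul (1 + 2 * r)
  have h3 := (tendsto_exp_neg_two_mul.mul tendsto_inv_atTop_zero).const_mul r
  have h4 := h2.sub h3
  rw [show (1 + 2 * r) * 0 - r * (0 * 0) = 0 by ring] at h4
  exact h4

/-- Convexity of `exp` along the chord from `-c` to `0`. -/
lemma exp_sub_exp_bounds {σ c : ℝ} (h0 : 0 < σ) (h1 : σ < 1) (hc : 0 ≤ c) :
    0 ≤ Real.exp (-σ * c) - Real.exp (-1 * c) ∧
      Real.exp (-σ * c) - Real.exp (-1 * c) ≤ 1 - σ ^ 2 := by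
  constructor
  · rw [sub_nonneg]
    exact Real.exp_le_exp.2 (by nlinarith)
  · have h := convexOn_exp.2 (Set.mem_univ (-c)) (Set.mem_univ 0) h0.le
      (show (0:ℝ) ≤ 1 - σ by linarith) (by ring)
    simp only [smul_eq_mul, mul_zero, add_zero, Real.exp_zero, mul_one] at h
    rw [show σ * -c = -σ * c by ring] at h
    rw [show -1 * c = -c by ring]
    have hp := Real.exp_pos (-c)
    nlinarith

lemma phi_self (σ r : ℝ) : phi σ r r = 0 := by simp [phi]

/-- `0 ≤ φ_σ - φ_1 ≤ (1 - σ²)(s - r)`: all three vanish at `s = r`, and their `s`-derivatives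
are ordered by `exp_sub_exp_bounds`. -/
lemma phi_sub_bounds {σ r s : ℝ} (h0 : 0 < σ) (h1 : σ < 1) (hr : 0 ≤ r) (hs : r ≤ s) :
    0 ≤ phi σ r s - phi 1 r s ∧ phi σ r s - phi 1 r s ≤ (1 - σ ^ 2) * (s - r) := by
  have hd : ∀ y, HasDerivAt (fun y => phi σ r y - phi 1 r y)
      (Real.exp (-σ * (r + 2 * (y - r))) - Real.exp (-1 * (r + 2 * (y - r)))) y :=
    fun y => (hasDerivAt_phi h0 r y).sub (hasDerivAt_phi one_pos r y)
  have hb : ∀ y, r ≤ y → _ := fun y hy =>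
    exp_sub_exp_bounds h0 h1 (show 0 ≤ r + 2 * (y - r) by linarith)
  constructor
  · have hm : MonotoneOn (fun y => phi σ r y - phi 1 r y) (Set.Ici r) := by
      refine monotoneOn_of_hasDerivWithinAt_nonneg (convex_Ici r)
        (fun x _ => (hd x).continuousAt.continuousWithinAt)
        (fun x _ => (hd x).hasDerivWithinAt) ?_
      intro x hx
      rw [interior_Ici] at hx
      exact (hb x (le_of_lt hx)).1
    simpa [phi_self] using hm Set.self_mem_Ici hs hs
  · have hd2 : ∀ y, HasDerivAt (fun y => (phi σ r y - phi 1 r y) - (1 - σ ^ 2) * (y - r)) _ y :=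
      fun y => (hd y).sub (((hasDerivAt_id y).sub_const r).const_mul (1 - σ ^ 2))
    have hm : AntitoneOn (fun y => (phi σ r y - phi 1 r y) - (1 - σ ^ 2) * (y - r))
        (Set.Ici r) := by
      refine antitoneOn_of_hasDerivWithinAt_nonpos (convex_Ici r)
        (fun x _ => (hd2 x).continuousAt.continuousWithinAt)
        (fun x _ => (hd2 x).hasDerivWithinAt) ?_
      intro x hx
      rw [interior_Ici] at hx
      have := (hb x (le_of_lt hx)).2
      linarith
    have := hm Set.self_mem_Ici hs hs
    simp only [phi_self, sub_self, mul_zero] at this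
    linarith

/-- Comparison of the tail integrals: the factor `1 - σ² = λ` absorbs the `λ⁻¹` in `w₂⁻`
uniformly in `λ`. -/
lemma tail_sub_bounds {σ r : ℝ} (h0 : 0 < σ) (h1 : σ < 1) (hr : 0 < r) :
    0 ≤ tail σ r r - tail 1 r r ∧
      tail σ r r - tail 1 r r ≤ (1 - σ ^ 2) * tailZero r r := by
  constructor
  · refine nonneg_of_deriv_nonpos_of_tendsto (f := fun s => tail σ r s - tail 1 r s)
      (fun s hs => (hasDerivAt_tail h0 (by linarith)).sub
        (hasDerivAt_tail one_pos (by linarith))) ?_ ?_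
    · intro s hs
      have hb := (phi_sub_bounds h0 h1 hr.le hs).1
      have : 0 ≤ Real.exp (-2 * s) * (phi σ r s - phi 1 r s) / s ^ 2 := by positivity
      have e : Real.exp (-2 * s) * (phi σ r s - phi 1 r s) / s ^ 2
        = Real.exp (-2 * s) * phi σ r s / s ^ 2 - Real.exp (-2 * s) * phi 1 r s / s ^ 2 := by ring
      linarith
    · simpa using (tendsto_tail h0 r).sub (tendsto_tail one_pos r)
  · rw [← sub_nonneg]
    refine nonneg_of_deriv_nonpos_of_tendsto
      (f := fun s => (1 - σ ^ 2) * tailZero r s - (tail σ r s - tail 1 r s))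
      (fun s hs => ((hasDerivAt_tailZero (by linarith)).const_mul _).sub
        ((hasDerivAt_tail h0 (by linarith)).sub (hasDerivAt_tail one_pos (by linarith)))) ?_ ?_
    · intro s hs
      have hb := sub_nonneg.2 (phi_sub_bounds h0 h1 hr.le hs).2
      have : 0 ≤ Real.exp (-2 * s) *
          ((1 - σ ^ 2) * (s - r) - (phi σ r s - phi 1 r s)) / s ^ 2 := by positivity
      have e : Real.exp (-2 * s) *
          ((1 - σ ^ 2) * (s - r) - (phi σ r s - phi 1 r s)) / s ^ 2
        = (1 - σ ^ 2) * (Real.exp (-2 * s) * (s - r) / s ^ 2)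
          - (Real.exp (-2 * s) * phi σ r s / s ^ 2
            - Real.exp (-2 * s) * phi 1 r s / s ^ 2) := by ring
      linarith
    · simpa using ((tendsto_tailZero r).const_mul (1 - σ ^ 2)).sub
        ((tendsto_tail h0 r).sub (tendsto_tail one_pos r))

lemma tailZero_le {r : ℝ} (hr : 5 / 2 ≤ r) : tailZero r r ≤ Real.exp (-2 * r) / 35 := by
  have hr0 : 0 < r := by linarith
  have h := expInt_le (x := 2 * r) (by linarith)
  rw [show -(2 * r) = -2 * r by ring] at h
  have hp := Real.exp_pos (-2 * r)
  have h2 : (1 + 2 * r) * expInt (2 * r) ≤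
      (1 + 2 * r) * (Real.exp (-2 * r) * ((2 * r + 1) / (2 * r * (2 * r + 2)))) := by gcongr
  have e1 : r * (Real.exp (-2 * r) / r) = Real.exp (-2 * r) := by field_simp
  have e2 : (1 + 2 * r) * (Real.exp (-2 * r) * ((2 * r + 1) / (2 * r * (2 * r + 2))))
      = Real.exp (-2 * r) + Real.exp (-2 * r) / (2 * r * (2 * r + 2)) := by
    field_simp; ring
  have h3 : Real.exp (-2 * r) / (2 * r * (2 * r + 2)) ≤ Real.exp (-2 * r) / 35 := by
    gcongr; nlinarith
  unfold tailZero
  linarith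

/-! ### The differential equation -/

/-- `r g₃(r)`, expanded. -/
noncomputable def rg3 (σ x : ℝ) : ℝ :=
  Real.exp (-σ * x) + a1 / σ * (Real.exp (-σ * x) * expInt (2 * x)
    - Real.exp (σ * x) * (1 + σ) * expInt (2 * (1 + σ) * x))

/-- The derivative of `rg3`. -/
noncomputable def rg3' (σ x : ℝ) : ℝ :=
  -σ * Real.exp (-σ * x) + a1 * (-(Real.exp (-σ * x) * expInt (2 * x))
    - Real.exp (σ * x) * (1 + σ) * expInt (2 * (1 + σ) * x)
    + Real.exp (-σ * x) * (Real.exp (-2 * x) / x))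

lemma exp_reflect (σ x : ℝ) : Real.exp (σ * x) * Real.exp (-(2 * (1 + σ) * x))
    = Real.exp (-σ * x) * Real.exp (-2 * x) := by
  rw [← Real.exp_add, ← Real.exp_add]; congr 1; ring

lemma hasDerivAt_rg3 {σ x : ℝ} (hσ : 0 < σ) (hx : 0 < x) :
    HasDerivAt (rg3 σ) (rg3' σ x) x := by
  have h1 := hasDerivAt_exp_mul (-σ) x
  have h2 := h1.mul (hasDerivAt_expInt_mul (c := 2) (by positivity) hx)
  have h3 := ((hasDerivAt_exp_mul σ x).mul_const (1 + σ)).mul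
    (hasDerivAt_expInt_mul (c := 2 * (1 + σ)) (by positivity) hx)
  refine (h1.add ((h2.sub h3).const_mul (a1 / σ))).congr_deriv ?_
  have e5 : Real.exp (-(2 * x)) = Real.exp (-2 * x) := by congr 1; ring
  have e := exp_reflect σ x
  rw [e5]
  unfold rg3'
  generalize Real.exp (-(2 * (1 + σ) * x)) = B at *
  generalize Real.exp (-σ * x) = A at *
  generalize Real.exp (-2 * x) = C at *
  field_simp
  linear_combination (a1 * (1 + σ)) * e

/-- `(r g₃)'' = σ² (r g₃) - a₁ e^{-(2+σ)r} / r²`. -/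
lemma hasDerivAt_rg3' {σ x : ℝ} (hσ : 0 < σ) (hx : 0 < x) :
    HasDerivAt (rg3' σ)
      (σ ^ 2 * rg3 σ x - a1 * (Real.exp (-σ * x) * Real.exp (-2 * x) / x ^ 2)) x := by
  have h1 := hasDerivAt_exp_mul (-σ) x
  have h2 := h1.mul (hasDerivAt_expInt_mul (c := 2) (by positivity) hx)
  have h3 := ((hasDerivAt_exp_mul σ x).mul_const (1 + σ)).mul
    (hasDerivAt_expInt_mul (c := 2 * (1 + σ)) (by positivity) hx)
  have h4 := h1.mul ((hasDerivAt_exp_mul (-2) x).div (hasDerivAt_id x) hx.ne')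
  refine ((h1.const_mul (-σ)).add (((h2.neg.sub h3).add h4).const_mul a1)).congr_deriv ?_
  have e5 : Real.exp (-(2 * x)) = Real.exp (-2 * x) := by congr 1; ring
  have e := exp_reflect σ x
  simp only [id, Pi.div_apply]
  rw [e5]
  unfold rg3
  generalize Real.exp (-(2 * (1 + σ) * x)) = B at *
  generalize Real.exp (-σ * x) = A at *
  generalize Real.exp (-2 * x) = C at *
  field_simp
  linear_combination (a1 * (1 + σ) * x) * e

lemma rg3_eq_tail {σ : ℝ} (hσ : 0 < σ) (r : ℝ) :
    rg3 σ r = Real.exp (-σ * r) - a1 * tail σ r r := by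
  unfold rg3 tail
  rw [phi_self]
  field_simp
  ring

lemma g3_eq {σ x : ℝ} (hσ : 0 < σ) (hx : 0 < x) : g3 σ x = rg3 σ x / x := by
  unfold g3 rg3
  have e : Real.exp (-σ * x) * Real.exp (2 * σ * x) = Real.exp (σ * x) := by
    rw [← Real.exp_add]; congr 1; ring
  rw [← e]
  field_simp
  ring

lemma g30_eq {x : ℝ} (hx : 0 < x) : g30 x = rg3 1 x / x := by
  unfold g30 gfun rg3
  rw [show 2 * (1 + 1) * x = 4 * x by ring, show -1 * x = -x by ring, one_mul]
  field_simp
  ring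

/-- The residual in closed form, as a difference of tail integrals. -/
lemma residual_eq {lam r : ℝ} (h0 : 0 < lam) (h1 : lam < 1) (hr : 0 < r) :
    -(deriv (deriv (w2m lam)) r) - (2 / r) * deriv (w2m lam) r
        + (1 - lam - a1 * Real.exp (-2 * r) / r ^ 2) * w2m lam r - g30 r
      = a1 ^ 2 * Real.exp (-2 * r) / r ^ 3 *
        (lam⁻¹ * (tail (Real.sqrt (1 - lam)) r r - tail 1 r r)) := by
  have hσ : 0 < Real.sqrt (1 - lam) := Real.sqrt_pos.2 (by linarith)
  have hsq : Real.sqrt (1 - lam) ^ 2 = 1 - lam := Real.sq_sqrt (by linarith)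
  set σ := Real.sqrt (1 - lam) with hσdef
  have hw : ∀ x, 0 < x → w2m lam x = lam⁻¹ * (rg3 σ x - rg3 1 x) / x := by
    intro x hx
    unfold w2m
    rw [← hσdef, g3_eq hσ hx, g30_eq hx]
    ring
  have hd1 : ∀ x, 0 < x → HasDerivAt (w2m lam)
      (lam⁻¹ * (rg3' σ x - rg3' 1 x) / x - lam⁻¹ * (rg3 σ x - rg3 1 x) / x ^ 2) x := by
    intro x hx
    have h := (((hasDerivAt_rg3 hσ hx).sub (hasDerivAt_rg3 one_pos hx)).const_mul lam⁻¹).div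
      (hasDerivAt_id x) hx.ne'
    have h' := h.congr_of_eventuallyEq (f₁ := w2m lam)
      (by filter_upwards [Ioi_mem_nhds hx] with y hy using hw y hy)
    refine h'.congr_deriv ?_
    simp only [id, Pi.sub_apply]
    field_simp
  have hd2 : HasDerivAt (deriv (w2m lam))
      (lam⁻¹ * ((σ ^ 2 * rg3 σ r - a1 * (Real.exp (-σ * r) * Real.exp (-2 * r) / r ^ 2))
          - (1 ^ 2 * rg3 1 r - a1 * (Real.exp (-1 * r) * Real.exp (-2 * r) / r ^ 2))) / r
        - 2 * (lam⁻¹ * (rg3' σ r - rg3' 1 r)) / r ^ 2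
        + 2 * (lam⁻¹ * (rg3 σ r - rg3 1 r)) / r ^ 3) r := by
    have ha := (((hasDerivAt_rg3' hσ hr).sub (hasDerivAt_rg3' one_pos hr)).const_mul lam⁻¹).div
      (hasDerivAt_id r) hr.ne'
    have hb := (((hasDerivAt_rg3 hσ hr).sub (hasDerivAt_rg3 one_pos hr)).const_mul lam⁻¹).div
      ((hasDerivAt_id r).pow 2) (pow_ne_zero 2 hr.ne')
    have h' := (ha.sub hb).congr_of_eventuallyEq (f₁ := deriv (w2m lam))
      (by filter_upwards [Ioi_mem_nhds hr] with y hy using (hd1 y hy).deriv)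
    refine h'.congr_deriv ?_
    simp only [id, Pi.sub_apply, Pi.pow_apply]
    field_simp
    ring
  rw [hd2.deriv, (hd1 r hr).deriv, hw r hr, g30_eq hr, hsq, rg3_eq_tail hσ, rg3_eq_tail one_pos]
  field_simp
  ring

lemma exp_neg_two_mul_le {r : ℝ} (hr : 5 / 2 ≤ r) : Real.exp (-2 * r) ≤ 1 / 143 := by
  have h1 : Real.exp (-2 * r) ≤ (Real.exp 1 ^ 5)⁻¹ := by
    rw [← Real.exp_nat_mul, ← Real.exp_neg]
    exact Real.exp_le_exp.2 (by push_cast; linarith)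
  have h2 : (143 : ℝ) ≤ Real.exp 1 ^ 5 := by
    calc (143 : ℝ) ≤ (2.7 : ℝ) ^ 5 := by norm_num
      _ ≤ Real.exp 1 ^ 5 := by
        gcongr
        linarith [Real.exp_one_gt_d9]
  calc _ ≤ _ := h1
    _ ≤ (143 : ℝ)⁻¹ := by gcongr
    _ = 1 / 143 := by norm_num

/-- For `λ ∈ (0,1)`, `σ = √(1-λ)`: on `[5/2,∞)` the residual of `w₂⁻` in the approximate
inhomogeneous `L₋` equation satisfies `|R₂(r)| < (3/250) e^{-2r}/r³`, and
`|w₂⁻(r)| < (51/50) e^{-σr}`. -/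
theorem w2m_residual_and_bound
    (lam : ℝ) (hlam : lam ∈ Set.Ioo (0:ℝ) 1)
    (σ : ℝ) (hσ : σ = Real.sqrt (1 - lam))
    (r : ℝ) (hr : 5 / 2 ≤ r) :
    |(-(deriv (deriv (w2m lam)) r) - (2 / r) * deriv (w2m lam) r
        + (1 - lam - a1 * Real.exp (-2 * r) / r ^ 2) * w2m lam r - g30 r)| <
      (3 / 250) * Real.exp (-2 * r) / r ^ 3 ∧
    |w2m lam r| < (51 / 50) * Real.exp (-σ * r) := by
  obtain ⟨h0, h1⟩ := hlam
  have hr0 : 0 < r := by linarith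
  have hσ0 : 0 < σ := hσ ▸ Real.sqrt_pos.2 (by linarith)
  have hsq : σ ^ 2 = 1 - lam := hσ ▸ Real.sq_sqrt (by linarith)
  have hσ1 : σ < 1 := by nlinarith
  have hlamσ : lam = (1 - σ) * (1 + σ) := by linarith
  obtain ⟨hT0, hT1⟩ := tail_sub_bounds hσ0 hσ1 hr0
  have hZ := tailZero_le hr
  have hE := exp_neg_two_mul_le hr
  have hEp := Real.exp_pos (-2 * r)
  -- `D` is the difference quotient in `λ` of the tail integral.
  obtain ⟨D, hD⟩ : ∃ D, D = lam⁻¹ * (tail σ r r - tail 1 r r) := ⟨_, rfl⟩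
  have hD0 : 0 ≤ D := by rw [hD]; positivity
  have hD1 : D ≤ Real.exp (-2 * r) / 35 := by
    rw [hD, inv_mul_le_iff₀ h0]
    rw [show 1 - σ ^ 2 = lam by linarith] at hT1
    exact hT1.trans (mul_le_mul_of_nonneg_left hZ h0.le)
  constructor
  · rw [residual_eq h0 h1 hr0, ← hσ, ← hD, abs_of_nonneg (by positivity)]
    have hc : a1 ^ 2 * D < 3 / 250 := by
      have hDn : D ≤ 1 / 5005 := by linarith
      calc a1 ^ 2 * D ≤ a1 ^ 2 * (1 / 5005) := by gcongr
        _ < 3 / 250 := by unfold a1; norm_num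
    have hq : 0 < Real.exp (-2 * r) / r ^ 3 := by positivity
    calc a1 ^ 2 * Real.exp (-2 * r) / r ^ 3 * D
        = a1 ^ 2 * D * (Real.exp (-2 * r) / r ^ 3) := by ring
      _ < 3 / 250 * (Real.exp (-2 * r) / r ^ 3) := by gcongr
      _ = _ := by ring
  · have hw : w2m lam r = lam⁻¹ * (Real.exp (-σ * r) - Real.exp (-1 * r)) / r - a1 * D / r := by
      unfold w2m
      rw [← hσ, g3_eq hσ0 hr0, g30_eq hr0, rg3_eq_tail hσ0, rg3_eq_tail one_pos, hD]
      ring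
    have hS := Real.exp_pos (-σ * r)
    have hdiff0 : 0 ≤ Real.exp (-σ * r) - Real.exp (-1 * r) :=
      (exp_sub_exp_bounds hσ0 hσ1 hr0.le).1
    -- `1 - e^{-(1-σ)r} ≤ (1-σ)r`, and `1 - σ ≤ λ`.
    have hdiff1 : Real.exp (-σ * r) - Real.exp (-1 * r) ≤ Real.exp (-σ * r) * (lam * r) := by
      have e : Real.exp (-1 * r) = Real.exp (-σ * r) * Real.exp (-((1 - σ) * r)) := by
        rw [← Real.exp_add]; congr 1; ring
      have h := Real.add_one_le_exp (-((1 - σ) * r))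
      have h2 : (1 - σ) * r ≤ lam * r := by
        gcongr
        nlinarith
      rw [e]
      nlinarith
    have ha : 0 ≤ lam⁻¹ * (Real.exp (-σ * r) - Real.exp (-1 * r)) / r := by positivity
    have hb : lam⁻¹ * (Real.exp (-σ * r) - Real.exp (-1 * r)) / r ≤ Real.exp (-σ * r) := by
      rw [div_le_iff₀ hr0, inv_mul_le_iff₀ h0]
      linarith
    have ha1 : 0 ≤ a1 := by unfold a1; positivity
    have hc : 0 ≤ a1 * D / r := by positivity
    have hes : Real.exp (-2 * r) ≤ Real.exp (-σ * r) := Real.exp_le_exp.2 (by nlinarith)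
    have hd : a1 * D / r ≤ Real.exp (-σ * r) := by
      rw [div_le_iff₀ hr0]
      have : a1 ≤ 35 := by unfold a1; norm_num
      calc a1 * D ≤ 35 * (Real.exp (-2 * r) / 35) := by gcongr
        _ = Real.exp (-2 * r) := by ring
        _ ≤ Real.exp (-σ * r) * r := by nlinarith
    rw [hw, abs_lt]
    constructor <;> linarith
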